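/- Theorem 3.4: The total number of almost-square factors (counted as pairs (start position, length)) in any square-free word of length n ≥ 2 is less than 2n·log_{5/4}(n). -/

import Mathlib

/-- `E` is an extension of `W`: `W` with one letter inserted at some position. -/
def Extends {A : Type*} (W E : List A) : Prop :=
  ∃ (W₁ W₂ : List A) (x : A), W = W₁ ++ W₂ ∧ E = W₁ ++ x :: W₂

/-- `WW'` is an almost-square: `W'` is an extension of `W`, or `W'` is obtained
from `W` by deleting one letter (equivalently, `W` is an extension of `W'`). -/
def AlmostSq {A : Type*} (W W' : List A) : Prop :=
  Extends W W' ∨ Extends W' W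

/-- `U` contains a square (a nonempty factor of the form `X ++ X`). -/
def HasSquare {A : Type*} (U : List A) : Prop :=
  ∃ X : List A, X ≠ [] ∧ X ++ X <:+: U

def SquareFree {A : Type*} (U : List A) : Prop := ¬ HasSquare U

/-- `F` realizes the pattern `X Y₁ X Y₂ X ⋯ X Y_t X` (with `2*t+1` nonempty blocks,
all odd-indexed blocks equal to `X`). -/
def RealizesPat {A : Type*} (t : ℕ) (F : List A) : Prop :=
  ∃ (X : List A) (Y : Fin t → List A), X ≠ [] ∧ (∀ i, Y i ≠ []) ∧
    F = X ++ (List.ofFn (fun i => Y i ++ X)).flatten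

/-- `W` contains the pattern `X Y₁ X ⋯ X Y_t X`. -/
def ContainsPat {A : Type*} (t : ℕ) (W : List A) : Prop :=
  ∃ F : List A, F <:+: W ∧ RealizesPat t F

/-- `W` is extremal `X Y₁ X ⋯ X Y_t X`-avoiding over the alphabet `A`. -/
def ExtremalPat {A : Type*} (t : ℕ) (W : List A) : Prop :=
  ¬ ContainsPat t W ∧ ∀ E : List A, Extends W E → ContainsPat t E

/-- `W` is extremal square-free over the alphabet `A`. -/
def ExtremalSF {A : Type*} (W : List A) : Prop :=
  SquareFree W ∧ ∀ E : List A, Extends W E → HasSquare E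

/-- The word `L` starts with an almost-square `W W'`, `|W| = k`, where `W'` is `W` with a letter
inserted at a position `a ≥ 1`. -/
def InsertionPrefix {A : Type*} (L : List A) (k : ℕ) : Prop :=
  2 * k + 1 ≤ L.length ∧ ∃ a, 1 ≤ a ∧ a ≤ k ∧ (∀ i < a, L[i]? = L[i + k]?) ∧
    ∀ i, a ≤ i → i < k → L[i]? = L[i + k + 1]?

/-- The word `L` starts with an almost-square `W W'`, `|W'| = k`, where `W'` is `W` with the
letter at position `a` deleted. -/
def DeletionPrefix {A : Type*} (L : List A) (k : ℕ) : Prop :=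
  2 * k + 1 ≤ L.length ∧ ∃ a ≤ k, (∀ i < a, L[i]? = L[i + k + 1]?) ∧
    ∀ i, a ≤ i → i < k → L[i + 1]? = L[i + k + 1]?

theorem SquareFree.of_infix {A : Type*} {L M : List A} (hM : SquareFree M) (h : L <:+: M) :
    SquareFree L :=
  fun ⟨X, hX, hXL⟩ => hM ⟨X, hX, hXL.trans h⟩

/-- A square-free word has no factor of length `2 * m` with period `m`. -/
theorem SquareFree.not_periodic {A : Type*} {L : List A} (hL : SquareFree L) {s m : ℕ}
    (hm : 0 < m) (hs : s + 2 * m ≤ L.length)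
    (h : ∀ j < m, L[s + j]? = L[s + j + m]?) : False := by
  refine hL ⟨(L.drop s).take m, ?_, ?_⟩
  · rw [← List.length_pos_iff]
    simp only [List.length_take, List.length_drop]
    omega
  · have hX : (L.drop s).take m = ((L.drop s).drop m).take m := by
      apply List.ext_getElem?
      intro i
      simp only [List.getElem?_take, List.drop_drop, List.getElem?_drop]
      split_ifs with hi
      · rw [h i hi]
        congr 1
        omega
      · rfl
    have : (L.drop s).take m ++ (L.drop s).take m = (L.drop s).take (m + m) := by
      rw [List.take_add, ← hX]
    rw [this]
    exact (List.take_prefix _ _).isInfix.trans (List.drop_suffix _ _).isInfix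

/-- Every almost-square prefix has odd length `2 * k + 1` and is an insertion or a deletion. Inserting a letter at the front of `W` is the same as deleting the last letter of the
longer left half. -/
theorem AlmostSq.exists_prefix {A : Type*} {L W W' : List A} (h : AlmostSq W W')
    (hL : W ++ W' <+: L) :
    ∃ k, (W ++ W').length = 2 * k + 1 ∧ (InsertionPrefix L k ∨ DeletionPrefix L k) := by
  have hlen := hL.length_le
  have hget : ∀ i < (W ++ W').length, L[i]? = (W ++ W')[i]? := by
    intro i hi
    obtain ⟨T, rfl⟩ := hL
    rw [List.getElem?_append_left hi]
  rcases h with ⟨U, V, x, rfl, rfl⟩ | ⟨U, V, x, rfl, rfl⟩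
  · simp only [List.length_append, List.length_cons] at hlen hget ⊢
    refine ⟨U.length + V.length, by omega, ?_⟩
    have hU : ∀ i < U.length, L[i]? = L[i + (U.length + V.length)]? := by
      intro i hi
      rw [hget _ (by omega), hget _ (by omega)]
      grind
    have hV : ∀ i, U.length ≤ i → i < U.length + V.length →
        L[i]? = L[i + (U.length + V.length) + 1]? := by
      intro i hi hi'
      rw [hget _ (by omega), hget _ (by omega)]
      grind
    rcases Nat.eq_zero_or_pos U.length with h0 | h0
    · refine .inr ⟨by omega, _, le_rfl, fun i hi => hV i (by omega) hi, ?_⟩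
      intro i hi hi'
      omega
    · exact .inl ⟨by omega, U.length, h0, by omega, hU, hV⟩
  · simp only [List.length_append, List.length_cons] at hlen hget ⊢
    refine ⟨U.length + V.length, by omega, .inr ⟨by omega, U.length, by omega, ?_, ?_⟩⟩
    · intro i hi
      rw [hget _ (by omega), hget _ (by omega)]
      grind
    · intro i hi hi'
      obtain ⟨j, rfl⟩ := Nat.exists_eq_add_of_le hi
      have h1 : U.length + j + 1 - U.length = j + 1 := by omega
      have h2 : U.length + j + (U.length + V.length) + 1 - (U ++ x :: V).length - U.length = j := by
        simp only [List.length_append, List.length_cons]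
        omega
      rw [hget _ (by omega), hget _ (by omega),
        List.getElem?_append_left (by simp only [List.length_append, List.length_cons]; omega),
        List.getElem?_append_right (by omega), h1, List.getElem?_cons_succ,
        List.getElem?_append_right (by simp only [List.length_append, List.length_cons]; omega),
        List.getElem?_append_right (by simp only [List.length_append, List.length_cons]; omega), h2]

theorem InsertionPrefix.gap {A : Type*} {L : List A} (hL : SquareFree L) {k l : ℕ}
    (hk : InsertionPrefix L k) (hl : InsertionPrefix L l) (hkl : k < l) : 5 * k ≤ 4 * l := by
  obtain ⟨-, a, ha, hak, hka, hkb⟩ := hk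
  obtain ⟨hlen, b, hb, hbl, hla, hlb⟩ := hl
  by_contra hlt
  obtain ⟨d, rfl⟩ : ∃ d, l = k + d := ⟨l - k, by omega⟩
  have hmin : min a b < d := by
    by_contra hmin
    refine hL.not_periodic (s := k) (m := d) (by omega) (by omega) fun j hj => ?_
    have h1 := hka j (by omega)
    have h2 := hla j (by omega)
    convert h1.symm.trans h2 using 2 <;> omega
  have hmax : k < max a b + d := by
    by_contra hmax
    refine hL.not_periodic (s := max a b + k + 1) (m := d) (by omega) (by omega)
      fun j hj => ?_
    have h1 := hkb (max a b + j) (by omega) (by omega)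
    have h2 := hlb (max a b + j) (by omega) (by omega)
    convert h1.symm.trans h2 using 2 <;> omega
  rcases lt_or_ge a b with hab | hab
  · refine hL.not_periodic (s := a + k + 1) (m := d - 1) (by omega) (by omega)
      fun j hj => ?_
    have h1 := hkb (a + j) (by omega) (by omega)
    have h2 := hla (a + j) (by omega)
    convert h1.symm.trans h2 using 2 <;> omega
  · refine hL.not_periodic (s := b + k) (m := d + 1) (by omega) (by omega)
      fun j hj => ?_
    have h1 := hka (b + j) (by omega)
    have h2 := hlb (b + j) (by omega) (by omega)
    convert h1.symm.trans h2 using 2 <;> omega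

theorem DeletionPrefix.gap {A : Type*} {L : List A} (hL : SquareFree L) {k l : ℕ}
    (hk : DeletionPrefix L k) (hl : DeletionPrefix L l) (hkl : k < l) : 5 * k ≤ 4 * l := by
  obtain ⟨-, a, hak, hka, hkb⟩ := hk
  obtain ⟨hlen, b, hbl, hla, hlb⟩ := hl
  by_contra hlt
  obtain ⟨d, rfl⟩ : ∃ d, l = k + d := ⟨l - k, by omega⟩
  have hb : 0 < b := by
    by_contra hb
    refine hL.not_periodic (s := 1) (m := k + d) (by omega) (by omega) fun j hj => ?_
    convert hlb j (by omega) (by omega) using 2 <;> omega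
  have hmin : min a b < d := by
    by_contra hmin
    refine hL.not_periodic (s := k + 1) (m := d) (by omega) (by omega) fun j hj => ?_
    have h1 := hka j (by omega)
    have h2 := hla j (by omega)
    convert h1.symm.trans h2 using 2 <;> omega
  have hmax : k < max a b + d := by
    by_contra hmax
    refine hL.not_periodic (s := max a b + k + 1) (m := d) (by omega) (by omega)
      fun j hj => ?_
    have h1 := hkb (max a b + j) (by omega) (by omega)
    have h2 := hlb (max a b + j) (by omega) (by omega)
    convert h1.symm.trans h2 using 2 <;> omega
  rcases lt_or_ge a b with hab | hab
  · refine hL.not_periodic (s := a + k + 1) (m := d + 1) (by omega) (by omega)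
      fun j hj => ?_
    have h1 := hkb (a + j) (by omega) (by omega)
    have h2 := hla (a + j + 1) (by omega)
    convert h1.symm.trans h2 using 2 <;> omega
  · refine hL.not_periodic (s := b + k + 2) (m := d - 1) (by omega) (by omega)
      fun j hj => ?_
    have h1 := hka (b + j + 1) (by omega)
    have h2 := hlb (b + j) (by omega) (by omega)
    convert h1.symm.trans h2 using 2 <;> omega

/-- A set of positive integers in `[1, M]` growing geometrically with ratio `5 / 4` has at most
`1 + log_{5/4} M` elements. -/
theorem card_le_one_add_logb {T : Finset ℕ} {M : ℝ} (hM : 1 ≤ M) (hpos : ∀ k ∈ T, 0 < k)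
    (hle : ∀ k ∈ T, (k : ℝ) ≤ M) (hgap : ∀ k ∈ T, ∀ l ∈ T, k < l → 5 * k ≤ 4 * l) :
    (T.card : ℝ) ≤ 1 + Real.logb (5 / 4) M := by
  have hlog : 0 ≤ Real.logb (5 / 4) M := Real.logb_nonneg (by norm_num) hM
  have hlt : ∀ k ∈ T, ∀ l ∈ T, k < l →
      ⌊Real.logb (5 / 4) k⌋₊ < ⌊Real.logb (5 / 4) l⌋₊ := by
    intro k hk l hl hkl
    have hk0 : (0 : ℝ) < k := by exact_mod_cast hpos k hk
    have hk1 : (1 : ℝ) ≤ k := by exact_mod_cast hpos k hk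
    have h5 : (5 : ℝ) * k ≤ 4 * l := by exact_mod_cast hgap k hk l hl hkl
    have hstep : Real.logb (5 / 4) k + 1 ≤ Real.logb (5 / 4) l := by
      have h1 : Real.logb (5 / 4) (k * (5 / 4)) = Real.logb (5 / 4) k + 1 := by
        rw [Real.logb_mul hk0.ne' (by norm_num), Real.logb_self_eq_one (by norm_num)]
      rw [← h1]
      exact Real.logb_le_logb_of_le (by norm_num) (by positivity) (by linarith)
    rw [Nat.lt_iff_add_one_le, ← Nat.floor_add_one (Real.logb_nonneg (by norm_num) hk1)]
    exact Nat.floor_le_floor hstep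
  have hcard : T.card ≤ (Finset.range (⌊Real.logb (5 / 4) M⌋₊ + 1)).card := by
    refine Finset.card_le_card_of_injOn (fun k : ℕ => ⌊Real.logb (5 / 4) (k : ℝ)⌋₊) ?_ ?_
    · intro k hk
      have hk0 : (0 : ℝ) < k := by exact_mod_cast hpos k hk
      simp only [Finset.coe_range, Set.mem_Iio, Nat.lt_succ_iff]
      exact Nat.floor_le_floor (Real.logb_le_logb_of_le (by norm_num) hk0 (hle k hk))
    · intro k hk l hl hkl
      rcases lt_trichotomy k l with h | h | h
      · exact absurd hkl (hlt k hk l hl h).ne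
      · exact h
      · exact absurd hkl (hlt l hl k hk h).ne'
  rw [Finset.card_range] at hcard
  calc (T.card : ℝ) ≤ (⌊Real.logb (5 / 4) M⌋₊ : ℝ) + 1 := by exact_mod_cast hcard
    _ ≤ 1 + Real.logb (5 / 4) M := by linarith [Nat.floor_le hlog]

/-- The half-lengths `k` of the almost-square prefixes of a square-free word number fewer than
`2 * log_{5/4} n`. -/
theorem SquareFree.exists_halfLengths {A : Type*} {L : List A} (hL : SquareFree L) {n : ℕ}
    (hn : L.length ≤ n) (hn2 : 2 ≤ n) :
    ∃ S : Finset ℕ, (S.card : ℝ) < 2 * Real.logb (5 / 4) n ∧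
      ∀ W W' : List A, AlmostSq W W' → W ++ W' <+: L →
        ∃ k ∈ S, (W ++ W').length = 2 * k + 1 := by
  classical
  let I := (Finset.Icc 1 n).filter (InsertionPrefix L)
  let D := (Finset.Icc 1 n).filter (DeletionPrefix L)
  have hnR : (2 : ℝ) ≤ n := by exact_mod_cast hn2
  have hhalf : ∀ k : ℕ, 2 * k + 1 ≤ L.length → (k : ℝ) ≤ n / 2 := by
    intro k hk
    have : (2 : ℝ) * k ≤ n := by exact_mod_cast (by omega : 2 * k ≤ n)
    linarith
  have hI : (I.card : ℝ) ≤ 1 + Real.logb (5 / 4) (n / 2) := by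
    refine card_le_one_add_logb (by linarith) (fun k hk => ?_) (fun k hk => ?_)
      fun k hk l hl hkl => ?_
    · exact (Finset.mem_Icc.1 (Finset.mem_filter.1 hk).1).1
    · exact hhalf k (Finset.mem_filter.1 hk).2.1
    · exact (Finset.mem_filter.1 hk).2.gap hL (Finset.mem_filter.1 hl).2 hkl
  have hD : (D.card : ℝ) ≤ 1 + Real.logb (5 / 4) (n / 2) := by
    refine card_le_one_add_logb (by linarith) (fun k hk => ?_) (fun k hk => ?_)
      fun k hk l hl hkl => ?_
    · exact (Finset.mem_Icc.1 (Finset.mem_filter.1 hk).1).1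
    · exact hhalf k (Finset.mem_filter.1 hk).2.1
    · exact (Finset.mem_filter.1 hk).2.gap hL (Finset.mem_filter.1 hl).2 hkl
  refine ⟨insert 0 (I ∪ D), ?_, ?_⟩
  · have hcard : ((insert 0 (I ∪ D)).card : ℝ) ≤ I.card + D.card + 1 := by
      exact_mod_cast (Finset.card_insert_le _ _).trans
        (Nat.add_le_add_right (Finset.card_union_le _ _) 1)
    have hdiv : Real.logb (5 / 4) (n / 2) = Real.logb (5 / 4) n - Real.logb (5 / 4) 2 :=
      Real.logb_div (by positivity) (by norm_num)
    have htwo : (2 : ℝ) ≤ Real.logb (5 / 4) 2 := by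
      rw [Real.le_logb_iff_rpow_le (by norm_num) (by norm_num)]
      norm_num
    linarith
  · intro W W' h hpre
    obtain ⟨k, hk, hcases⟩ := h.exists_prefix hpre
    refine ⟨k, ?_, hk⟩
    have hlen := hpre.length_le
    rcases Nat.eq_zero_or_pos k with rfl | h0
    · exact Finset.mem_insert_self _ _
    · have hmem : k ∈ Finset.Icc 1 n := Finset.mem_Icc.2 ⟨h0, by omega⟩
      refine Finset.mem_insert_of_mem (Finset.mem_union.2 ?_)
      rcases hcases with h | h
      · exact .inl (Finset.mem_filter.2 ⟨hmem, h⟩)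
      · exact .inr (Finset.mem_filter.2 ⟨hmem, h⟩)

theorem stmt17 (A : Type*) (Q : List A) (hQ : SquareFree Q) (n : ℕ)
    (hn : Q.length = n) (hn2 : 2 ≤ n) :
    (Nat.card {pl : ℕ × ℕ | pl.1 < n ∧ ∃ W W' : List A, AlmostSq W W' ∧
        (W ++ W').length = pl.2 ∧ (W ++ W') <+: Q.drop pl.1} : ℝ)
      < 2 * n * Real.logb (5 / 4) n := by
  classical
  have hdrop (p : ℕ) := (hQ.of_infix (List.drop_suffix p Q).isInfix).exists_halfLengths
    (n := n) (by simp [hn]) hn2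
  choose S hcard hS using hdrop
  let F := (Finset.range n).biUnion fun p => (S p).image fun k => (p, 2 * k + 1)
  have hsub : {pl : ℕ × ℕ | pl.1 < n ∧ ∃ W W' : List A, AlmostSq W W' ∧
      (W ++ W').length = pl.2 ∧ (W ++ W') <+: Q.drop pl.1} ⊆ (F : Set (ℕ × ℕ)) := by
    rintro ⟨p, m⟩ ⟨hp, W, W', h, hlen, hpre⟩
    obtain ⟨k, hk, hkl⟩ := hS p W W' h hpre
    refine Finset.mem_biUnion.2 ⟨p, Finset.mem_range.2 hp, Finset.mem_image.2 ⟨k, hk, ?_⟩⟩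
    rw [← hkl, hlen]
  have hF : F.card ≤ ∑ p ∈ Finset.range n, (S p).card :=
    Finset.card_biUnion_le.trans (Finset.sum_le_sum fun p _ => Finset.card_image_le)
  calc _ ≤ (F.card : ℝ) := by
        have := Nat.card_mono F.finite_toSet hsub
        rw [Nat.card_coe_set_eq (F : Set (ℕ × ℕ)), Set.ncard_coe_finset] at this
        exact_mod_cast this
    _ ≤ ∑ p ∈ Finset.range n, ((S p).card : ℝ) := by exact_mod_cast hF
    _ < ∑ _p ∈ Finset.range n, 2 * Real.logb (5 / 4) n :=
        Finset.sum_lt_sum_of_nonempty (Finset.nonempty_range_iff.2 (by omega))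
          fun p _ => hcard p
    _ = 2 * n * Real.logb (5 / 4) n := by
        rw [Finset.sum_const, Finset.card_range, nsmul_eq_mul]
        ring
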